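/- Let n and t be positive integers and let p ∈ [0,1]. Then P(α̃(G(n,p)) > 2t) ≤ P(G(n,p) has a (t,t)-bipartite-hole) ≤ C(n,t)²(1−p)^{t²}, where C(n,t) denotes a binomial coefficient. -/

import Mathlib

def SimpleGraph.HasBipartiteHole {V : Type*} (G : SimpleGraph V) (s t : ℕ) : Prop :=
  ∃ S T : Finset V, Disjoint S T ∧ S.card = s ∧ T.card = t ∧
    ∀ a ∈ S, ∀ b ∈ T, ¬ G.Adj a b

noncomputable def SimpleGraph.biHoleNumber {V : Type*} (G : SimpleGraph V) : ℕ :=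
  sInf {r : ℕ | ∃ s t : ℕ, 0 < s ∧ 0 < t ∧ r = s + t - 1 ∧ ¬ G.HasBipartiteHole s t}

open Classical in
/-- The Erdős–Rényi probability that a graph drawn from `G(n, p)` satisfies property `A`. -/
noncomputable def erProb (n : ℕ) (p : ℝ) (A : SimpleGraph (Fin n) → Prop) : ℝ :=
  ∑ G : SimpleGraph (Fin n),
    if A G then p ^ G.edgeSet.ncard * (1 - p) ^ (n.choose 2 - G.edgeSet.ncard) else 0

/-!
For disjoint vertex sets `S` and `T`, a random graph has no edge between `S` and `T` exactly when
it is edge-disjoint from the complete bipartite graph between them. The `#S * #T` edges of that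
graph are absent independently, each with probability `1 - p`, and a union bound over all pairs
`(S, T)` bounds the probability of a bipartite hole. When `s + t` is at most the
bipartite-hole-number, there is an `(s, t)`-bipartite-hole, for otherwise `s + t - 1` would be a
smaller admissible value.
-/

section BipartiteHole

open SimpleGraph

variable {V : Type*} {G : SimpleGraph V}

theorem hasBipartiteHole_of_add_le_biHoleNumber {s t : ℕ} (hs : 0 < s) (ht : 0 < t)
    (h : s + t ≤ G.biHoleNumber) : G.HasBipartiteHole s t := by
  by_contra hG
  have hle : G.biHoleNumber ≤ s + t - 1 := Nat.sInf_le ⟨s, t, hs, ht, rfl, hG⟩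
  omega

theorem disjoint_between_top_iff {S T : Set V} :
    Disjoint G ((⊤ : SimpleGraph V).between S T) ↔ ∀ a ∈ S, ∀ b ∈ T, ¬ G.Adj a b := by
  simp only [disjoint_left, between_adj, top_adj]
  refine ⟨fun h a ha b hb hab ↦ h a b hab ⟨hab.ne, .inl ⟨ha, hb⟩⟩, ?_⟩
  rintro h a b hab ⟨-, ⟨ha, hb⟩ | ⟨ha, hb⟩⟩
  · exact h a ha b hb hab
  · exact h b hb a ha hab.symm

theorem edgeSet_between_top {S T : Set V} (hST : Disjoint S T) :
    ((⊤ : SimpleGraph V).between S T).edgeSet = (fun x : V × V ↦ s(x.1, x.2)) '' (S ×ˢ T) := by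
  ext ⟨a, b⟩
  simp only [mem_edgeSet, between_adj, top_adj, Set.mem_image, Set.mem_prod, Prod.exists,
    Sym2.eq_iff]
  grind

theorem ncard_edgeSet_between_top {S T : Set V} (hST : Disjoint S T) :
    ((⊤ : SimpleGraph V).between S T).edgeSet.ncard = S.ncard * T.ncard := by
  have hinj : Set.InjOn (fun x : V × V ↦ s(x.1, x.2)) (S ×ˢ T) := by
    rintro ⟨a, b⟩ ⟨ha, -⟩ ⟨c, d⟩ ⟨-, hd⟩ h
    obtain ⟨rfl, rfl⟩ | ⟨rfl, -⟩ := Sym2.eq_iff.1 h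
    · rfl
    · exact (Set.disjoint_left.1 hST ha hd).elim
  rw [edgeSet_between_top hST, hinj.ncard_image, Set.ncard_prod]

end BipartiteHole

section BinomialRandomGraph

open MeasureTheory ProbabilityTheory SimpleGraph unitInterval

theorem setBernoulli_real_disjoint {ι : Type*} {u F : Set ι} (p : I) (hF : F.Finite)
    (hFu : F ⊆ u) : setBer(u, p).real {s | Disjoint s F} = (1 - p : ℝ) ^ F.ncard := by
  lift F to Finset ι using hF
  have hpi : (fun P : ι → Prop ↦ {i | P i}) ⁻¹' {s | Disjoint s (F : Set ι)} =
      Set.pi F fun _ ↦ {False} := by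
    ext P
    simp [Set.disjoint_right]
  have hprod : setBer(u, p) {s | Disjoint s (F : Set ι)} = ∏ _i ∈ F, toNNReal (σ p) := by
    rw [setBernoulli_apply', hpi, Measure.infinitePi_pi _ fun _ _ ↦ .of_discrete]
    push_cast
    refine Finset.prod_congr rfl fun i hi ↦ ?_
    have hiu : i ∈ u := hFu hi
    simp [hiu]
  simp [measureReal_def, hprod]

variable {V : Type*}

section Countable

variable [Countable V]

instance measurableSingletonClass_simpleGraph : MeasurableSingletonClass (SimpleGraph V) where
  measurableSet_singleton G := by
    rw [← edgeSet_injective.preimage_image {G}, Set.image_singleton]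
    exact measurable_edgeSet (measurableSet_singleton G.edgeSet)

theorem measurableSet_setOf_disjoint (H : SimpleGraph V) : MeasurableSet {G | Disjoint G H} := by
  simp only [disjoint_left]
  measurability

theorem binomialRandom_real_disjoint (p : I) {H : SimpleGraph V} (hH : H.edgeSet.Finite) :
    G(V, p).real {G | Disjoint G H} = (1 - p : ℝ) ^ H.edgeSet.ncard := by
  rw [binomialRandom_eq_map,
    map_measureReal_apply measurable_fromEdgeSet (measurableSet_setOf_disjoint H)]
  simp only [Set.preimage_ofPred_eq, fromEdgeSet_disjoint]
  exact setBernoulli_real_disjoint p hH H.edgeSet_subset_compl_diagSet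

theorem binomialRandom_real_forall_not_adj (p : I) {S T : Finset V} (hST : Disjoint S T) :
    G(V, p).real {G | ∀ a ∈ S, ∀ b ∈ T, ¬ G.Adj a b} = (1 - p : ℝ) ^ (S.card * T.card) := by
  have hcoe : Disjoint (S : Set V) T := Finset.disjoint_coe.2 hST
  have hfin : ((⊤ : SimpleGraph V).between S T).edgeSet.Finite :=
    edgeSet_between_top hcoe ▸ (S.finite_toSet.prod T.finite_toSet).image _
  simpa only [disjoint_between_top_iff, ncard_edgeSet_between_top hcoe, Set.ncard_coe_finset,
    Finset.mem_coe] using binomialRandom_real_disjoint p hfin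

end Countable

theorem binomialRandom_real_hasBipartiteHole_le [Fintype V] (p : I) (s t : ℕ) :
    G(V, p).real {G | G.HasBipartiteHole s t} ≤
      (Fintype.card V).choose s * (Fintype.card V).choose t * (1 - p : ℝ) ^ (s * t) := by
  classical
  let pairs : Finset (Finset V × Finset V) :=
    Finset.univ.powersetCard s ×ˢ Finset.univ.powersetCard t
  let disjointPairs := pairs.filter fun x ↦ Disjoint x.1 x.2
  have hcard : disjointPairs.card ≤ (Fintype.card V).choose s * (Fintype.card V).choose t :=
    (Finset.card_filter_le _ _).trans_eq (by simp [pairs])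
  calc G(V, p).real {G | G.HasBipartiteHole s t}
      ≤ G(V, p).real (⋃ x ∈ disjointPairs, {G | ∀ a ∈ x.1, ∀ b ∈ x.2, ¬ G.Adj a b}) := by
        refine measureReal_mono ?_ (measure_ne_top _ _)
        rintro G ⟨S, T, hST, rfl, rfl, hG⟩
        exact Set.mem_biUnion (x := (S, T)) (by simp [disjointPairs, pairs, hST]) hG
    _ ≤ ∑ x ∈ disjointPairs, G(V, p).real {G | ∀ a ∈ x.1, ∀ b ∈ x.2, ¬ G.Adj a b} :=
        measureReal_biUnion_finset_le _ _
    _ = disjointPairs.card * (1 - p : ℝ) ^ (s * t) := by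
        rw [← nsmul_eq_mul, ← Finset.sum_const]
        refine Finset.sum_congr rfl fun x hx ↦ ?_
        simp only [disjointPairs, pairs, Finset.mem_filter, Finset.mem_product,
          Finset.mem_powersetCard_univ] at hx
        obtain ⟨⟨rfl, rfl⟩, hdisj⟩ := hx
        exact binomialRandom_real_forall_not_adj p hdisj
    _ ≤ (Fintype.card V).choose s * (Fintype.card V).choose t * (1 - p : ℝ) ^ (s * t) :=
        mul_le_mul_of_nonneg_right (mod_cast hcard) (pow_nonneg (one_minus_nonneg p) _)

theorem prob_biHoleNumber_gt_le_general [Fintype V] (p : I) {s t : ℕ} (hs : 0 < s) (ht : 0 < t) :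
    G(V, p).real {G | s + t < G.biHoleNumber} ≤ G(V, p).real {G | G.HasBipartiteHole s t} ∧
      G(V, p).real {G | G.HasBipartiteHole s t} ≤
        (Fintype.card V).choose s * (Fintype.card V).choose t * (1 - p : ℝ) ^ (s * t) :=
  ⟨measureReal_mono fun _ h ↦ hasBipartiteHole_of_add_le_biHoleNumber hs ht h.le,
    binomialRandom_real_hasBipartiteHole_le p s t⟩

theorem erProb_eq_binomialRandom_real (n : ℕ) (p : I) (A : SimpleGraph (Fin n) → Prop) :
    erProb n p A = G(Fin n, p).real {G | A G} := by
  classical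
  rw [erProb, ← Finset.sum_filter, ← Finset.coe_filter_univ, ← sum_measureReal_singleton]
  simp [measureReal_def]

end BinomialRandomGraph

theorem prob_biHoleNumber_gt_le (n t : ℕ) (hn : 1 ≤ n) (ht : 1 ≤ t)
    (p : ℝ) (hp0 : 0 ≤ p) (hp1 : p ≤ 1) :
    erProb n p (fun G => 2 * t < G.biHoleNumber) ≤
        erProb n p (fun G => G.HasBipartiteHole t t) ∧
      erProb n p (fun G => G.HasBipartiteHole t t) ≤
        (n.choose t : ℝ) ^ 2 * (1 - p) ^ (t ^ 2) := by
  lift p to unitInterval using ⟨hp0, hp1⟩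
  simpa only [erProb_eq_binomialRandom_real, two_mul, sq, Fintype.card_fin] using
    prob_biHoleNumber_gt_le_general (V := Fin n) p ht ht
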